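/- Let S, R ⊆ R^n be finite with S nonempty and suppose conv(S) + cone(R) contains the origin. Then (conv(S) + cone(R))⁺⁺ = conv(S) + cone(R). -/

import Mathlib

open RealInnerProductSpace Pointwise

noncomputable def polarP {n : ℕ} (P : Set (EuclideanSpace ℝ (Fin n))) :
    Set (EuclideanSpace ℝ (Fin n)) :=
  {z | ∀ x ∈ P, 1 + ⟪z, x⟫ ≥ 0}

noncomputable def coneOf {n : ℕ} (R : Finset (EuclideanSpace ℝ (Fin n))) :
    Set (EuclideanSpace ℝ (Fin n)) :=
  {x | ∃ μ : EuclideanSpace ℝ (Fin n) → ℝ, (∀ r, 0 ≤ μ r) ∧ x = ∑ r ∈ R, μ r • r}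

theorem coneOf_mono {n : ℕ} {T R : Finset (EuclideanSpace ℝ (Fin n))} (h : T ⊆ R) :
    coneOf T ⊆ coneOf R := by
  classical
  rintro x ⟨μ, hμ, rfl⟩
  refine ⟨fun r => if r ∈ T then μ r else 0, fun r => ?_, ?_⟩
  · dsimp only
    split_ifs
    · exact hμ r
    · exact le_rfl
  · rw [← Finset.sum_subset h]
    · exact Finset.sum_congr rfl fun r hr => by simp [hr]
    · intro r _ hr
      simp [hr]

theorem coneOf_erase {n : ℕ} [DecidableEq (EuclideanSpace ℝ (Fin n))]
    (R : Finset (EuclideanSpace ℝ (Fin n)))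
    (g : EuclideanSpace ℝ (Fin n) → ℝ) (hg : ∑ r ∈ R, g r • r = 0)
    (hpos : ∃ r ∈ R, 0 < g r) :
    coneOf R = ⋃ r ∈ R, coneOf (R.erase r) := by
  apply Set.Subset.antisymm
  · rintro x ⟨μ, hμ, rfl⟩
    obtain ⟨r1, hr1, hr1p⟩ := hpos
    obtain ⟨r0, hr0, hmin⟩ := (R.filter (fun r => 0 < g r)).exists_min_image
      (fun r => μ r / g r) ⟨r1, by simp [hr1, hr1p]⟩
    rw [Finset.mem_filter] at hr0
    obtain ⟨hr0, hr0p⟩ := hr0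
    simp only [Set.mem_iUnion]
    refine ⟨r0, hr0, fun r => if r ∈ R then μ r - μ r0 / g r0 * g r else 0, fun r => ?_, ?_⟩
    · dsimp only
      split_ifs with hr
      · rcases lt_or_ge 0 (g r) with h | h
        · have := hmin r (by simp [hr, h])
          have := (le_div_iff₀ h).1 this
          linarith
        · have h1 : 0 ≤ μ r0 / g r0 := div_nonneg (hμ _) hr0p.le
          have := mul_nonpos_of_nonneg_of_nonpos h1 h
          linarith [hμ r]
      · exact le_rfl
    · have h1 : ∑ r ∈ R, μ r • r = ∑ r ∈ R, (μ r - μ r0 / g r0 * g r) • r := by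
        simp only [sub_smul, Finset.sum_sub_distrib, mul_smul, ← Finset.smul_sum, hg]
        simp
      rw [h1, ← Finset.add_sum_erase R _ hr0, div_mul_cancel₀ _ hr0p.ne', sub_self, zero_smul,
        zero_add]
      exact Finset.sum_congr rfl fun r hr => by simp [Finset.mem_of_mem_erase hr]
  · exact Set.iUnion₂_subset fun r _ => coneOf_mono (Finset.erase_subset _ _)

theorem coneOf_closed_of_linInd {n : ℕ} (R : Finset (EuclideanSpace ℝ (Fin n)))
    (h : LinearIndependent ℝ (fun r : R => (r : EuclideanSpace ℝ (Fin n)))) :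
    IsClosed (coneOf R) := by
  classical
  let L : (R → ℝ) →ₗ[ℝ] EuclideanSpace ℝ (Fin n) :=
    Fintype.linearCombination ℝ (fun r : R => (r : EuclideanSpace ℝ (Fin n)))
  have hL : LinearMap.ker L = ⊥ :=
    LinearMap.ker_eq_bot.2 (linearIndependent_iff_injective_fintypeLinearCombination.1 h)
  have hc := LinearMap.isClosedEmbedding_of_injective hL
  have : coneOf R = L '' {w | ∀ r, 0 ≤ w r} := by
    ext x
    constructor
    · rintro ⟨μ, hμ, rfl⟩
      refine ⟨fun r => μ r, fun r => hμ _, ?_⟩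
      simp only [L, Fintype.linearCombination_apply]
      exact Finset.sum_coe_sort R (fun r => μ r • r)
    · rintro ⟨w, hw, rfl⟩
      refine ⟨fun r => if hr : r ∈ R then w ⟨r, hr⟩ else 0, fun r => ?_, ?_⟩
      · dsimp only
        split_ifs
        · exact hw _
        · exact le_rfl
      · simp only [L, Fintype.linearCombination_apply]
        rw [← Finset.sum_coe_sort R]
        exact Finset.sum_congr rfl fun r _ => by simp
  rw [this]
  apply hc.isClosedMap
  simp only [Set.ofPred_forall]
  exact isClosed_iInter fun r => isClosed_le continuous_const (continuous_apply r)

theorem coneOf_closed {n : ℕ} (R : Finset (EuclideanSpace ℝ (Fin n))) :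
    IsClosed (coneOf R) := by
  classical
  induction R using Finset.strongInduction with
  | H R ih =>
    by_cases h : LinearIndependent ℝ (fun r : R => (r : EuclideanSpace ℝ (Fin n)))
    · exact coneOf_closed_of_linInd R h
    · rw [Fintype.not_linearIndependent_iff] at h
      obtain ⟨g0, hg0, i, hi⟩ := h
      have key : ∃ g : EuclideanSpace ℝ (Fin n) → ℝ, ∑ r ∈ R, g r • r = 0 ∧
          ∃ r ∈ R, 0 < g r := by
        have hs : ∑ r ∈ R, (if hr : r ∈ R then g0 ⟨r, hr⟩ else 0) • r = 0 := by
          rw [← hg0, ← Finset.sum_coe_sort R]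
          exact Finset.sum_congr rfl fun r _ => by simp
        rcases lt_or_gt_of_ne hi with hi | hi
        · refine ⟨fun r => -(if hr : r ∈ R then g0 ⟨r, hr⟩ else 0), ?_, i, i.2, ?_⟩
          · simp only [neg_smul, Finset.sum_neg_distrib, hs, neg_zero]
          · simpa using hi
        · exact ⟨fun r => (if hr : r ∈ R then g0 ⟨r, hr⟩ else 0), hs, i, i.2, by simpa using hi⟩
      obtain ⟨g, hg, hp⟩ := key
      rw [coneOf_erase R g hg hp]
      exact R.finite_toSet.isClosed_biUnion fun r hr => ih _ (Finset.erase_ssubset hr)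

theorem coneOf_convex {n : ℕ} (R : Finset (EuclideanSpace ℝ (Fin n))) :
    Convex ℝ (coneOf R) := by
  rintro x ⟨μ, hμ, rfl⟩ y ⟨ν, hν, rfl⟩ a b ha hb _
  refine ⟨fun r => a * μ r + b * ν r,
    fun r => add_nonneg (mul_nonneg ha (hμ r)) (mul_nonneg hb (hν r)), ?_⟩
  simp only [add_smul, mul_smul, Finset.sum_add_distrib, Finset.smul_sum]

theorem stmt17 {n : ℕ} (S R : Finset (EuclideanSpace ℝ (Fin n))) (hS : S.Nonempty)
    (h0 : (0 : EuclideanSpace ℝ (Fin n)) ∈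
      convexHull ℝ (S : Set (EuclideanSpace ℝ (Fin n))) + coneOf R) :
    polarP (polarP (convexHull ℝ (S : Set (EuclideanSpace ℝ (Fin n))) + coneOf R)) =
      convexHull ℝ (S : Set (EuclideanSpace ℝ (Fin n))) + coneOf R := by
  have hcl : IsClosed (convexHull ℝ (S : Set (EuclideanSpace ℝ (Fin n))) + coneOf R) :=
    (coneOf_closed R).add_left_of_isCompact (S.finite_toSet.isCompact_convexHull (𝕜 := ℝ))
  have hcv : Convex ℝ (convexHull ℝ (S : Set (EuclideanSpace ℝ (Fin n))) + coneOf R) :=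
    (convex_convexHull ℝ _).add (coneOf_convex R)
  generalize convexHull ℝ (S : Set (EuclideanSpace ℝ (Fin n))) + coneOf R = P at *
  apply Set.Subset.antisymm
  · intro x hx
    by_contra hxP
    obtain ⟨f, u, hfx, hfP⟩ := geometric_hahn_banach_point_closed hcv hcl hxP
    have hu : u < 0 := by simpa using hfP 0 h0
    have hu' : 0 < (-u)⁻¹ := inv_pos.2 (by linarith)
    have hz : ∀ y, ⟪(-u)⁻¹ • (InnerProductSpace.toDual ℝ _).symm f, y⟫ = (-u)⁻¹ * f y := by
      intro y
      rw [real_inner_smul_left, InnerProductSpace.toDual_symm_apply]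
    have hone : (-u)⁻¹ * u = -1 := by
      rw [inv_neg, neg_mul, inv_mul_cancel₀ hu.ne]
    have hmem : (-u)⁻¹ • (InnerProductSpace.toDual ℝ _).symm f ∈ polarP P := by
      intro y hy
      rw [hz]
      have := mul_lt_mul_of_pos_left (hfP y hy) hu'
      linarith
    have h2 := hx _ hmem
    rw [real_inner_comm, hz] at h2
    have := mul_lt_mul_of_pos_left hfx hu'
    linarith
  · intro x hx z hz
    rw [real_inner_comm]
    exact hz x hx
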